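/- Let 0 < γ < β ≤ n, p = γ/β, and f ∈ L^p(H^γ_∞). Then there exists C = C(γ,β,n) > 0 such that for all t > 0, H^γ_∞({x : M_{H^β_∞} f(x) > t}) ≤ (C/t^p) ∫ |f|^p dH^γ_∞. -/

import Mathlib

open scoped ENNReal
open Metric Set MeasureTheory

noncomputable section

/-- `ℝⁿ` as Euclidean space. -/
abbrev Rn (n : ℕ) := EuclideanSpace ℝ (Fin n)

/-- The Choquet integral of a nonnegative function `g` with respect to a
(monotone) set function `C`: `∫ g dC := ∫_0^∞ C({g > t}) dt`. -/
noncomputable def choquet {X : Type*} (C : Set X → ℝ≥0∞) (g : X → ℝ≥0∞) : ℝ≥0∞ :=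
  ∫⁻ t in Ioi (0 : ℝ), C {x | ENNReal.ofReal t < g x}

/-- The Choquet integral of `g` restricted to a set `A`. -/
noncomputable def choquetOn {X : Type*} (C : Set X → ℝ≥0∞) (A : Set X) (g : X → ℝ≥0∞) : ℝ≥0∞ :=
  ∫⁻ t in Ioi (0 : ℝ), C {x | x ∈ A ∧ ENNReal.ofReal t < g x}

/-- The `L^∞(C)` norm: `inf {λ > 0 : C({|f| > λ}) = 0}` (formulated in `ℝ≥0∞`). -/
noncomputable def choquetEssSup {X : Type*} (C : Set X → ℝ≥0∞) (f : X → ℝ) : ℝ≥0∞ :=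
  sInf {l : ℝ≥0∞ | C {x | l < ENNReal.ofReal |f x|} = 0}

/-- `C`-quasicontinuity of a function `f`. -/
def QuasiCont {X : Type*} [TopologicalSpace X] (C : Set X → ℝ≥0∞) (f : X → ℝ) : Prop :=
  ∀ ε : ℝ≥0∞, 0 < ε → ∃ U : Set X, IsOpen U ∧ C U < ε ∧ ContinuousOn f Uᶜ

/-- Membership in the capacitary space `L^p(C)`: `C`-quasicontinuous with
finite `p`-th power Choquet integral. -/
def MemChoquetLp {X : Type*} [TopologicalSpace X] (C : Set X → ℝ≥0∞) (p : ℝ) (f : X → ℝ) : Prop :=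
  QuasiCont C f ∧ choquet C (fun x => ENNReal.ofReal |f x| ^ p) < ∞

/-- The normalization constant `ω_β = π^{β/2}/Γ(β/2+1)`. -/
noncomputable def omegaC (β : ℝ) : ℝ≥0∞ :=
  ENNReal.ofReal (Real.pi ^ (β / 2) / Real.Gamma (β / 2 + 1))

/-- The `β`-dimensional Hausdorff content `H^β_∞`, defined via countable
coverings by balls: `inf {∑ ω_β r_i^β : E ⊆ ⋃ B(x_i, r_i)}`. -/
noncomputable def hContent (n : ℕ) (β : ℝ) (E : Set (Rn n)) : ℝ≥0∞ :=
  ⨅ (c : ℕ → Rn n × ℝ) (_ : E ⊆ ⋃ i, ball (c i).1 (c i).2),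
    ∑' i, omegaC β * ENNReal.ofReal ((c i).2 ^ β)

/-- The centered Hausdorff content maximal function
`M_{H^β_∞} g(x) := sup_{r>0} (1/(ω_β r^β)) ∫_{B(x,r)} g dH^β_∞`. -/
noncomputable def maximalH (n : ℕ) (β : ℝ) (g : Rn n → ℝ≥0∞) (x : Rn n) : ℝ≥0∞ :=
  ⨆ (r : ℝ) (_ : 0 < r),
    (omegaC β * ENNReal.ofReal (r ^ β))⁻¹ * choquetOn (hContent n β) (ball x r) g

/-!
Let `q = β / γ = 1 / p`. Since `∑ a_j ^ q ≤ (∑ a_j) ^ q`, the contents compare as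
`H^β_∞ ≤ K (H^γ_∞) ^ q` with `K = ω_β / ω_γ ^ q`. The substitution `t = s ^ q` in the Choquet
integral turns this into the pointwise bound `M_{H^β_∞} g ≤ q (M_{H^γ_∞} (g ^ p)) ^ q`, so
everything reduces to the weak-type `(1, 1)` estimate for `M_{H^γ_∞}`.

For the latter, cover each dyadic superlevel set `{g > 2 ^ k a}`, `a = t / 2`, by balls, and put
the weighted cost of every ball as an atom at its centre; the total mass of this measure `μ` is
comparable to `∫ g dH^γ_∞`. The doubled balls have content at most `2 ^ γ μ(ℝⁿ) / a`. At a point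
`y` outside them, a covering ball that meets `B(y, s)` has its centre in `B(y, 2s)`; levels of `g`
below `a` contribute at most half of an average exceeding `t`, so `μ(B(y, 2s)) ≥ a ω_γ s ^ γ` for
some `s`. By Vitali's covering lemma the set of such points has content at most
`12 ^ γ μ(ℝⁿ) / a`.
-/

open Filter Topology

section DyadicSums

variable {φ : ℝ → ℝ≥0∞} {τ : ℕ → ℝ}

lemma lintegral_Ioi_eq_tsum_Ioc (hτ : Monotone τ) (hτ' : Tendsto τ atTop atTop) :
    ∫⁻ t in Ioi (τ 0), φ t = ∑' k, ∫⁻ t in Ioc (τ k) (τ (k + 1)), φ t := by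
  have hunion : ⋃ k, Ioc (τ k) (τ (k + 1)) = Ioi (τ 0) :=
    iUnion_Ioc_map_succ_eq_Ioi (fun k => hτ (Nat.zero_le k)) (not_bddAbove_of_tendsto_atTop hτ')
  rw [← hunion]
  exact lintegral_iUnion (fun _ => measurableSet_Ioc) hτ.pairwise_disjoint_on_Ioc_succ _

lemma lintegral_Ioi_le_tsum (hφ : Antitone φ) (hτ : Monotone τ) (hτ' : Tendsto τ atTop atTop) :
    ∫⁻ t in Ioi (τ 0), φ t ≤ ∑' k, ENNReal.ofReal (τ (k + 1) - τ k) * φ (τ k) := by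
  rw [lintegral_Ioi_eq_tsum_Ioc hτ hτ']
  refine ENNReal.tsum_le_tsum fun k => ?_
  calc ∫⁻ t in Ioc (τ k) (τ (k + 1)), φ t
      ≤ ∫⁻ _ in Ioc (τ k) (τ (k + 1)), φ (τ k) :=
        setLIntegral_mono' measurableSet_Ioc fun t ht => hφ ht.1.le
    _ = ENNReal.ofReal (τ (k + 1) - τ k) * φ (τ k) := by
        rw [setLIntegral_const, Real.volume_Ioc, mul_comm]

lemma tsum_le_lintegral_Ioi (hφ : Antitone φ) (hτ : Monotone τ) (hτ' : Tendsto τ atTop atTop) :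
    ∑' k, ENNReal.ofReal (τ (k + 1) - τ k) * φ (τ (k + 1)) ≤ ∫⁻ t in Ioi (τ 0), φ t := by
  rw [lintegral_Ioi_eq_tsum_Ioc hτ hτ']
  refine ENNReal.tsum_le_tsum fun k => ?_
  calc ENNReal.ofReal (τ (k + 1) - τ k) * φ (τ (k + 1))
      = ∫⁻ _ in Ioc (τ k) (τ (k + 1)), φ (τ (k + 1)) := by
        rw [setLIntegral_const, Real.volume_Ioc, mul_comm]
    _ ≤ ∫⁻ t in Ioc (τ k) (τ (k + 1)), φ t :=
        setLIntegral_mono' measurableSet_Ioc fun t ht => hφ ht.2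

lemma monotone_two_pow_mul {a : ℝ} (ha : 0 ≤ a) : Monotone fun k : ℕ => 2 ^ k * a :=
  (pow_right_mono₀ one_le_two).mul_const ha

lemma tendsto_two_pow_mul_atTop {a : ℝ} (ha : 0 < a) :
    Tendsto (fun k : ℕ => 2 ^ k * a) atTop atTop :=
  (tendsto_pow_atTop_atTop_of_one_lt one_lt_two).atTop_mul_const ha

lemma lintegral_Ioi_le_tsum_two_pow (hφ : Antitone φ) {a : ℝ} (ha : 0 < a) :
    ∫⁻ t in Ioi a, φ t ≤ ∑' k : ℕ, ENNReal.ofReal (2 ^ k * a) * φ (2 ^ k * a) := by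
  have h := lintegral_Ioi_le_tsum hφ (monotone_two_pow_mul ha.le) (tendsto_two_pow_mul_atTop ha)
  have hstep (k : ℕ) : 2 ^ (k + 1) * a - 2 ^ k * a = 2 ^ k * a := by ring
  simpa only [hstep, pow_zero, one_mul] using h

lemma tsum_two_pow_le_lintegral_Ioi (hφ : Antitone φ) {a : ℝ} (ha : 0 < a) :
    ∑' k : ℕ, ENNReal.ofReal (2 ^ k * a) * φ (2 ^ k * a) ≤ 2 * ∫⁻ t in Ioi 0, φ t := by
  have ha2 := half_pos ha
  have h := tsum_le_lintegral_Ioi hφ (monotone_two_pow_mul ha2.le) (tendsto_two_pow_mul_atTop ha2)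
  have hnode (k : ℕ) : 2 ^ (k + 1) * (a / 2) = 2 ^ k * a := by ring
  have hstep (k : ℕ) :
      ENNReal.ofReal (2 ^ k * a) = 2 * ENNReal.ofReal (2 ^ k * a - 2 ^ k * (a / 2)) := by
    rw [← ENNReal.ofReal_ofNat 2, ← ENNReal.ofReal_mul zero_le_two]
    ring_nf
  simp only [hnode] at h
  calc ∑' k : ℕ, ENNReal.ofReal (2 ^ k * a) * φ (2 ^ k * a)
      = 2 * ∑' k : ℕ, ENNReal.ofReal (2 ^ k * a - 2 ^ k * (a / 2)) * φ (2 ^ k * a) := by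
        simp only [hstep, mul_assoc, ENNReal.tsum_mul_left]
    _ ≤ 2 * ∫⁻ t in Ioi 0, φ t := by
        gcongr
        refine h.trans (lintegral_mono_set (Ioi_subset_Ioi ?_))
        positivity

end DyadicSums

section Powers

variable {q : ℝ}

lemma ennreal_rpow_eq_rpow_sub_one_mul (hq : 1 ≤ q) (x : ℝ≥0∞) : x ^ q = x ^ (q - 1) * x := by
  simpa using ENNReal.rpow_add_of_nonneg (x := x) (q - 1) 1 (sub_nonneg.2 hq) zero_le_one

lemma tsum_rpow_le_rpow_tsum {ι : Type*} (a : ι → ℝ≥0∞) (hq : 1 ≤ q) :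
    ∑' i, a i ^ q ≤ (∑' i, a i) ^ q := by
  simp only [ennreal_rpow_eq_rpow_sub_one_mul hq, ← ENNReal.tsum_mul_left]
  gcongr with i
  exact ENNReal.le_tsum i

lemma image_rpow_Ioi_zero (hq : 0 < q) : (fun s : ℝ => s ^ q) '' Ioi 0 = Ioi 0 :=
  Subset.antisymm (image_subset_iff.2 fun _ hs => Real.rpow_pos_of_pos hs q) fun t ht =>
    ⟨t ^ q⁻¹, Real.rpow_pos_of_pos ht _, Real.rpow_inv_rpow (le_of_lt ht) hq.ne'⟩

lemma lintegral_Ioi_rpow_le (hq : 1 ≤ q) {φ : ℝ → ℝ≥0∞} (hφ : Antitone φ) :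
    ∫⁻ t in Ioi 0, φ t ^ q ≤ ENNReal.ofReal q * (∫⁻ s in Ioi 0, φ (s ^ q)) ^ q := by
  have hq0 : 0 < q := by linarith
  have hq1 : 0 ≤ q - 1 := by linarith
  have hanti : AntitoneOn (fun s : ℝ => φ (s ^ q)) (Ioi 0) := fun s hs u _ hsu =>
    hφ (Real.rpow_le_rpow (le_of_lt hs) hsu hq0.le)
  set I := ∫⁻ s in Ioi 0, φ (s ^ q)
  -- Chebyshev: `φ (u ^ q)` is at least `φ (s ^ q)` for `u` in `(0, s]`.
  have hI {s : ℝ} (hs : 0 < s) : ENNReal.ofReal s * φ (s ^ q) ≤ I :=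
    calc ENNReal.ofReal s * φ (s ^ q) = ∫⁻ _ in Ioc 0 s, φ (s ^ q) := by
          rw [setLIntegral_const, Real.volume_Ioc, sub_zero, mul_comm]
      _ ≤ ∫⁻ u in Ioc 0 s, φ (u ^ q) :=
          setLIntegral_mono' measurableSet_Ioc fun u hu => hanti hu.1 hs hu.2
      _ ≤ I := lintegral_mono_set Ioc_subset_Ioi_self
  have hderiv (s : ℝ) (_ : s ∈ Ioi 0) :
      HasDerivWithinAt (fun s : ℝ => s ^ q) (q * s ^ (q - 1)) (Ioi 0) s :=
    (Real.hasDerivAt_rpow_const (Or.inr hq)).hasDerivWithinAt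
  have hmono : MonotoneOn (fun s : ℝ => s ^ q) (Ioi 0) := fun s hs u _ hsu =>
    Real.rpow_le_rpow (le_of_lt hs) hsu hq0.le
  calc ∫⁻ t in Ioi 0, φ t ^ q
      = ∫⁻ s in Ioi 0, ENNReal.ofReal (q * s ^ (q - 1)) * φ (s ^ q) ^ q := by
        rw [← lintegral_image_eq_lintegral_deriv_mul_of_monotoneOn measurableSet_Ioi hderiv hmono
          fun t => φ t ^ q, image_rpow_Ioi_zero hq0]
    _ ≤ ∫⁻ s in Ioi 0, ENNReal.ofReal q * I ^ (q - 1) * φ (s ^ q) := by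
        refine setLIntegral_mono' measurableSet_Ioi fun s hs => ?_
        calc ENNReal.ofReal (q * s ^ (q - 1)) * φ (s ^ q) ^ q
            = ENNReal.ofReal q * (ENNReal.ofReal s * φ (s ^ q)) ^ (q - 1) * φ (s ^ q) := by
              rw [ENNReal.ofReal_mul hq0.le, ← ENNReal.ofReal_rpow_of_pos hs,
                ENNReal.mul_rpow_of_nonneg _ _ hq1, ennreal_rpow_eq_rpow_sub_one_mul hq (φ _)]
              ring
          _ ≤ ENNReal.ofReal q * I ^ (q - 1) * φ (s ^ q) := by
              gcongr
              exact hI hs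
    _ = ENNReal.ofReal q * I ^ q := by
        rw [lintegral_const_mul'' _ (aemeasurable_restrict_of_antitoneOn measurableSet_Ioi hanti),
          mul_assoc, ← ennreal_rpow_eq_rpow_sub_one_mul hq]

end Powers

lemma tsum_iInf_eq_iInf_tsum {ι : Type*} [Countable ι] {κ : ι → Type*}
    (F : ∀ i, κ i → ℝ≥0∞) : ∑' i, ⨅ c, F i c = ⨅ c : ∀ i, κ i, ∑' i, F i (c i) := by
  refine le_antisymm (le_iInf fun c => ENNReal.tsum_le_tsum fun i => iInf_le _ _) ?_
  refine le_of_forall_gt_imp_ge_of_dense fun A hA => ?_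
  obtain ⟨δ, hδ, hδA⟩ := ENNReal.exists_pos_sum_of_countable' (tsub_pos_of_lt hA).ne' ι
  have hlt (i : ι) : ⨅ c, F i c < (⨅ c, F i c) + δ i :=
    ENNReal.lt_add_right (ENNReal.ne_top_of_tsum_ne_top hA.ne_top i) (hδ i).ne'
  choose c hc using fun i => iInf_lt_iff.1 (hlt i)
  calc ⨅ c : ∀ i, κ i, ∑' i, F i (c i) ≤ ∑' i, F i (c i) := iInf_le _ c
    _ ≤ ∑' i, ((⨅ c, F i c) + δ i) := ENNReal.tsum_le_tsum fun i => (hc i).le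
    _ = (∑' i, ⨅ c, F i c) + ∑' i, δ i := ENNReal.tsum_add
    _ ≤ (∑' i, ⨅ c, F i c) + (A - ∑' i, ⨅ c, F i c) := by gcongr
    _ = A := add_tsub_cancel_of_le hA.le

section Choquet

variable {X : Type*} {C : Set X → ℝ≥0∞}

lemma antitone_superlevel (hC : Monotone C) (A : Set X) (g : X → ℝ≥0∞) :
    Antitone fun t : ℝ => C {x | x ∈ A ∧ ENNReal.ofReal t < g x} := fun _ _ htu =>
  hC fun _ hx => ⟨hx.1, (ENNReal.ofReal_le_ofReal htu).trans_lt hx.2⟩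

lemma choquetOn_le_add_tsum (hC : Monotone C) (A : Set X) (g : X → ℝ≥0∞) {a : ℝ} (ha : 0 < a) :
    choquetOn C A g ≤ ENNReal.ofReal a * C A +
      ∑' k : ℕ, ENNReal.ofReal (2 ^ k * a) *
        C {x | x ∈ A ∧ ENNReal.ofReal (2 ^ k * a) < g x} := by
  rw [choquetOn, ← Ioc_union_Ioi_eq_Ioi ha.le]
  refine (lintegral_union_le _ _ _).trans (add_le_add ?_ ?_)
  · calc ∫⁻ t in Ioc 0 a, C {x | x ∈ A ∧ ENNReal.ofReal t < g x}
        ≤ ∫⁻ _ in Ioc 0 a, C A := lintegral_mono fun _ => hC fun _ hx => hx.1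
      _ = ENNReal.ofReal a * C A := by
          rw [setLIntegral_const, Real.volume_Ioc, sub_zero, mul_comm]
  · exact lintegral_Ioi_le_tsum_two_pow (antitone_superlevel hC A g) ha

lemma tsum_two_pow_le_choquet (hC : Monotone C) (g : X → ℝ≥0∞) {a : ℝ} (ha : 0 < a) :
    ∑' k : ℕ, ENNReal.ofReal (2 ^ k * a) * C {x | ENNReal.ofReal (2 ^ k * a) < g x} ≤
      2 * choquet C g := by
  simpa only [choquet, mem_univ, true_and] using
    tsum_two_pow_le_lintegral_Ioi (antitone_superlevel hC univ g) ha

lemma choquetOn_le_rpow {D : Set X → ℝ≥0∞} (hC : Monotone C) {K : ℝ≥0∞} (hK : K ≠ ∞) {q : ℝ}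
    (hq : 1 ≤ q) (hD : ∀ E, D E ≤ K * C E ^ q) (A : Set X) (g : X → ℝ≥0∞) :
    choquetOn D A g ≤ K * (ENNReal.ofReal q * choquetOn C A (fun x => g x ^ q⁻¹) ^ q) := by
  have hq0 : 0 < q := by linarith
  have hlevel : choquetOn C A (fun x => g x ^ q⁻¹) =
      ∫⁻ s in Ioi (0 : ℝ), C {x | x ∈ A ∧ ENNReal.ofReal (s ^ q) < g x} := by
    refine setLIntegral_congr_fun measurableSet_Ioi fun s hs => ?_
    simp only [ENNReal.lt_rpow_inv_iff hq0, ENNReal.ofReal_rpow_of_pos hs]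
  calc choquetOn D A g
      ≤ ∫⁻ t in Ioi (0 : ℝ), K * C {x | x ∈ A ∧ ENNReal.ofReal t < g x} ^ q :=
        lintegral_mono fun _ => hD _
    _ = K * ∫⁻ t in Ioi (0 : ℝ), C {x | x ∈ A ∧ ENNReal.ofReal t < g x} ^ q :=
        lintegral_const_mul' _ _ hK
    _ ≤ K * (ENNReal.ofReal q * choquetOn C A (fun x => g x ^ q⁻¹) ^ q) := by
        rw [hlevel]
        gcongr
        exact lintegral_Ioi_rpow_le hq (antitone_superlevel hC A g)

end Choquet

section BallCost

variable {β γ r : ℝ}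

/-- The cost `ω_β r^β` of a ball of radius `r` in the definition of `hContent`. -/
def ballCost (β r : ℝ) : ℝ≥0∞ := omegaC β * ENNReal.ofReal (r ^ β)

lemma omegaC_ne_zero (hβ : 0 < β) : omegaC β ≠ 0 := by
  have hΓ := Real.Gamma_pos_of_pos (show 0 < β / 2 + 1 by linarith)
  exact (ENNReal.ofReal_pos.2 (div_pos (by positivity) hΓ)).ne'

lemma omegaC_ne_top (β : ℝ) : omegaC β ≠ ∞ := ENNReal.ofReal_ne_top

lemma ballCost_ne_zero (hβ : 0 < β) (hr : 0 < r) : ballCost β r ≠ 0 :=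
  mul_ne_zero (omegaC_ne_zero hβ) (ENNReal.ofReal_pos.2 (Real.rpow_pos_of_pos hr β)).ne'

lemma ballCost_ne_top (β r : ℝ) : ballCost β r ≠ ∞ :=
  ENNReal.mul_ne_top (omegaC_ne_top β) ENNReal.ofReal_ne_top

lemma ballCost_mul {c : ℝ} (hc : 0 ≤ c) (hr : 0 ≤ r) :
    ballCost β (c * r) = ENNReal.ofReal (c ^ β) * ballCost β r := by
  rw [ballCost, ballCost, Real.mul_rpow hc hr, ENNReal.ofReal_mul (Real.rpow_nonneg hc β),
    mul_left_comm]

lemma tendsto_ballCost_atTop (hβ : 0 < β) : Tendsto (ballCost β) atTop (𝓝 ∞) := by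
  have h := ENNReal.Tendsto.const_mul (a := omegaC β)
    (ENNReal.tendsto_ofReal_atTop.comp (tendsto_rpow_atTop hβ)) (Or.inl ENNReal.top_ne_zero)
  rwa [ENNReal.mul_top (omegaC_ne_zero hβ)] at h

lemma omegaC_rpow_ne_zero (hγ : 0 < γ) (q : ℝ) : omegaC γ ^ q ≠ 0 := by
  simp [ENNReal.rpow_eq_zero_iff, omegaC_ne_zero hγ, omegaC_ne_top γ]

lemma ballCost_eq_mul_rpow (hγ : 0 < γ) (hβ : 0 ≤ β) (hr : 0 < r) :
    ballCost β r = omegaC β / omegaC γ ^ (β / γ) * ballCost γ r ^ (β / γ) := by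
  have hq : 0 ≤ β / γ := div_nonneg hβ hγ.le
  have hω : omegaC γ ^ (β / γ) ≠ ∞ := ENNReal.rpow_ne_top_of_nonneg hq (omegaC_ne_top γ)
  rw [ballCost, ballCost, ENNReal.mul_rpow_of_nonneg _ _ hq,
    ENNReal.ofReal_rpow_of_pos (Real.rpow_pos_of_pos hr γ), ← Real.rpow_mul hr.le,
    mul_div_cancel₀ β hγ.ne', ← mul_assoc, ENNReal.div_mul_cancel (omegaC_rpow_ne_zero hγ _) hω]

end BallCost

section Content

variable {n : ℕ} {β γ : ℝ}

/-- A countable family of balls covering `E`, that is, a competitor in the infimum defining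
`hContent`. As there, negative radii are allowed: they give empty balls. -/
structure BallCover (E : Set (Rn n)) where
  center : ℕ → Rn n
  radius : ℕ → ℝ
  subset_iUnion_ball : E ⊆ ⋃ j, ball (center j) (radius j)

/-- The atomic measure placing the cost of every ball of a covering at its centre. Its total mass
is the cost of the covering. -/
def BallCover.centerMeasure {E : Set (Rn n)} (γ : ℝ) (c : BallCover E) : Measure (Rn n) :=
  Measure.sum fun j => ballCost γ (c.radius j) • Measure.dirac (c.center j)

lemma BallCover.centerMeasure_univ {E : Set (Rn n)} (c : BallCover E) :
    c.centerMeasure γ univ = ∑' j, ballCost γ (c.radius j) := by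
  simp [centerMeasure, Measure.sum_apply _ MeasurableSet.univ]

lemma BallCover.tsum_ballCost_le_centerMeasure {E : Set (Rn n)} (c : BallCover E)
    (s : Set (Rn n)) :
    ∑' j : {j | c.center j ∈ s}, ballCost γ (c.radius j) ≤ c.centerMeasure γ s := by
  rw [tsum_subtype _ fun j => ballCost γ (c.radius j)]
  refine le_trans (ENNReal.tsum_le_tsum fun j => ?_) (Measure.le_sum_apply _ s)
  by_cases hj : c.center j ∈ s
  · rw [indicator_of_mem (show j ∈ {j | c.center j ∈ s} from hj), Measure.smul_apply,
      Measure.dirac_apply_of_mem hj, smul_eq_mul, mul_one]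
  · rw [indicator_of_notMem (show j ∉ {j | c.center j ∈ s} from hj)]
    exact zero_le

lemma hContent_eq_iInf (E : Set (Rn n)) :
    hContent n γ E = ⨅ c : BallCover E, c.centerMeasure γ univ := by
  simp only [BallCover.centerMeasure_univ]
  exact le_antisymm
    (le_iInf fun c => iInf₂_le (fun j => (c.center j, c.radius j)) c.subset_iUnion_ball)
    (le_iInf₂ fun c hc => iInf_le (fun c : BallCover E => ∑' j, ballCost γ (c.radius j))
      ⟨fun j => (c j).1, fun j => (c j).2, hc⟩)

lemma hContent_mono : Monotone (hContent n γ) := fun _ _ hEF =>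
  le_iInf₂ fun c hc => iInf₂_le c (hEF.trans hc)

lemma hContent_le_tsum {ι : Type*} [Countable ι] (hγ : 0 < γ) {E : Set (Rn n)}
    (x : ι → Rn n) (r : ι → ℝ) (hE : E ⊆ ⋃ i, ball (x i) (r i)) :
    hContent n γ E ≤ ∑' i, ballCost γ (r i) := by
  obtain ⟨e, he⟩ := exists_injective_nat ι
  have hcost : (fun j => ballCost γ (Function.extend e r 0 j)) =
      Function.extend e (fun i => ballCost γ (r i)) 0 := by
    ext j
    by_cases hj : ∃ i, e i = j
    · obtain ⟨i, rfl⟩ := hj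
      simp only [he.extend_apply]
    · simp only [Function.extend_apply' _ _ _ hj, Pi.zero_apply, ballCost,
        Real.zero_rpow hγ.ne', ENNReal.ofReal_zero, mul_zero]
  calc hContent n γ E
      ≤ ∑' j, ballCost γ (Function.extend e r 0 j) := by
        refine iInf₂_le (fun j => (Function.extend e x 0 j, Function.extend e r 0 j))
          (hE.trans (iUnion_subset fun i => ?_))
        simpa only [he.extend_apply] using subset_iUnion
          (fun j => ball (Function.extend e x 0 j) (Function.extend e r 0 j)) (e i)
    _ = ∑' i, ballCost γ (r i) := by rw [hcost, tsum_extend_zero he]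

lemma hContent_empty (hγ : 0 < γ) : hContent n γ ∅ = 0 := by
  simpa using hContent_le_tsum hγ (ι := Empty) (n := n) nofun nofun (empty_subset _)

lemma hContent_ball_mul_le (hγ : 0 < γ) (x : Rn n) {c : ℝ} (hc : 0 ≤ c) (r : ℝ) :
    hContent n γ (ball x (c * r)) ≤ ENNReal.ofReal (c ^ γ) * ballCost γ r := by
  rcases le_total r 0 with hr | hr
  · rw [ball_eq_empty.2 (mul_nonpos_of_nonneg_of_nonpos hc hr), hContent_empty hγ]
    exact zero_le
  · rw [← ballCost_mul hc hr]
    simpa using hContent_le_tsum hγ (fun _ : Unit => x) (fun _ => c * r)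
      (subset_iUnion (fun _ : Unit => ball x (c * r)) ())

lemma hContent_ball_le (hγ : 0 < γ) (x : Rn n) (r : ℝ) :
    hContent n γ (ball x r) ≤ ballCost γ r := by
  simpa using hContent_ball_mul_le hγ x zero_le_one r

lemma hContent_iUnion_le {ι : Type*} [Countable ι] (hγ : 0 < γ) (E : ι → Set (Rn n)) :
    hContent n γ (⋃ i, E i) ≤ ∑' i, hContent n γ (E i) := by
  simp only [hContent_eq_iInf (E _), tsum_iInf_eq_iInf_tsum, BallCover.centerMeasure_univ]
  refine le_iInf fun c => ?_
  rw [← ENNReal.tsum_prod (f := fun i j => ballCost γ ((c i).radius j))]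
  refine hContent_le_tsum hγ (fun i : ι × ℕ => (c i.1).center i.2) _ ?_
  rw [iUnion_prod']
  exact iUnion_mono fun i => (c i).subset_iUnion_ball

lemma hContent_union_le (hγ : 0 < γ) (E F : Set (Rn n)) :
    hContent n γ (E ∪ F) ≤ hContent n γ E + hContent n γ F := by
  rw [union_eq_iUnion]
  refine (hContent_iUnion_le hγ _).trans_eq ?_
  rw [tsum_bool, add_comm]
  rfl

lemma hContent_ball_le_mul_rpow (hγ : 0 < γ) (hβ : 0 < β) (x : Rn n) (r : ℝ) :
    hContent n β (ball x r) ≤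
      omegaC β / omegaC γ ^ (β / γ) * ballCost γ r ^ (β / γ) := by
  rcases le_or_gt r 0 with hr | hr
  · rw [ball_eq_empty.2 hr, hContent_empty hβ]
    exact zero_le
  · exact (hContent_ball_le hβ x r).trans_eq (ballCost_eq_mul_rpow hγ hβ.le hr)

lemma omegaC_div_rpow_ne_zero (hγ : 0 < γ) (hβ : 0 < β) :
    omegaC β / omegaC γ ^ (β / γ) ≠ 0 :=
  (ENNReal.div_pos (omegaC_ne_zero hβ)
    (ENNReal.rpow_ne_top_of_nonneg (by positivity) (omegaC_ne_top γ))).ne'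

lemma omegaC_div_rpow_ne_top (hγ : 0 < γ) (β : ℝ) : omegaC β / omegaC γ ^ (β / γ) ≠ ∞ :=
  ENNReal.div_ne_top (omegaC_ne_top β) (omegaC_rpow_ne_zero hγ (β / γ))

lemma hContent_le_mul_rpow (hγ : 0 < γ) (hγβ : γ ≤ β) (E : Set (Rn n)) :
    hContent n β E ≤ omegaC β / omegaC γ ^ (β / γ) * hContent n γ E ^ (β / γ) := by
  have hβ : 0 < β := hγ.trans_le hγβ
  set K := omegaC β / omegaC γ ^ (β / γ)
  have hinf : K * hContent n γ E ^ (β / γ) =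
      ⨅ c : BallCover E, K * c.centerMeasure γ univ ^ (β / γ) := by
    rw [hContent_eq_iInf, ← ENNReal.mul_iInf_of_ne (omegaC_div_rpow_ne_zero hγ hβ)
      (omegaC_div_rpow_ne_top hγ β)]
    exact congrArg (K * ·) ((ENNReal.orderIsoRpow (β / γ) (div_pos hβ hγ)).map_iInf _)
  rw [hinf]
  refine le_iInf fun c => ?_
  calc hContent n β E
      ≤ ∑' j, hContent n β (ball (c.center j) (c.radius j)) :=
        (hContent_mono c.subset_iUnion_ball).trans (hContent_iUnion_le hβ _)
    _ ≤ ∑' j, K * ballCost γ (c.radius j) ^ (β / γ) :=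
        ENNReal.tsum_le_tsum fun j => hContent_ball_le_mul_rpow hγ hβ _ _
    _ ≤ K * c.centerMeasure γ univ ^ (β / γ) := by
        rw [ENNReal.tsum_mul_left, c.centerMeasure_univ]
        gcongr
        exact tsum_rpow_le_rpow_tsum _ ((one_le_div hγ).2 hγβ)

lemma mul_hContent_le_of_density_ge (hγ : 0 < γ) (μ : Measure (Rn n)) (s : ℝ≥0∞)
    {A : Set (Rn n)} (hA : ∀ x ∈ A, ∃ r > 0, s * ballCost γ r ≤ μ (closedBall x r)) :
    s * hContent n γ A ≤ ENNReal.ofReal (6 ^ γ) * μ univ := by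
  rcases eq_or_ne s 0 with rfl | hs
  · simp
  rcases eq_or_ne (μ univ) ∞ with hμ | hμ
  · rw [hμ, ENNReal.mul_top (ENNReal.ofReal_pos.2 (by positivity)).ne']
    exact le_top
  choose! r hr0 hr using hA
  obtain ⟨R, hR⟩ : ∃ R, ∀ ρ ≥ R, μ univ / s < ballCost γ ρ :=
    eventually_atTop.1 ((tendsto_ballCost_atTop hγ).eventually_const_lt
      (ENNReal.div_ne_top hμ hs).lt_top)
  have hrR (x) (hx : x ∈ A) : r x ≤ R := by
    by_contra! hlt
    refine (hR _ hlt.le).not_ge ?_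
    rw [ENNReal.le_div_iff_mul_le (Or.inl hs) (Or.inr hμ), mul_comm]
    exact (hr x hx).trans (measure_mono (subset_univ _))
  obtain ⟨u, huA, hdisj, hcov⟩ :=
    Vitali.exists_disjoint_subfamily_covering_enlargement_closedBall A id r R hrR 5 (by norm_num)
  have : Countable u := (hdisj.countable_of_nonempty_interior fun x hx =>
    ⟨x, ball_subset_interior_closedBall (mem_ball_self (hr0 x (huA hx)))⟩).to_subtype
  have hAu : A ⊆ ⋃ y : u, ball (y : Rn n) (6 * r y) := fun x hx => by
    obtain ⟨y, hy, hxy⟩ := hcov x hx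
    refine mem_iUnion.2 ⟨⟨y, hy⟩, closedBall_subset_ball ?_
      (hxy (mem_closedBall_self (hr0 x hx).le))⟩
    linarith [hr0 y (huA hy)]
  calc s * hContent n γ A
      ≤ s * ∑' y : u, ENNReal.ofReal (6 ^ γ) * ballCost γ (r y) := by
        gcongr
        exact (hContent_mono hAu).trans <| (hContent_iUnion_le hγ _).trans <|
          ENNReal.tsum_le_tsum fun y => hContent_ball_mul_le hγ _ (by norm_num) _
    _ = ENNReal.ofReal (6 ^ γ) * ∑' y : u, s * ballCost γ (r y) := by
        rw [ENNReal.tsum_mul_left, ENNReal.tsum_mul_left, mul_left_comm]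
    _ ≤ ENNReal.ofReal (6 ^ γ) * ∑' y : u, μ (closedBall (y : Rn n) (r y)) := by
        gcongr with y
        exact hr y (huA y.2)
    _ ≤ ENNReal.ofReal (6 ^ γ) * μ univ := by
        gcongr
        exact tsum_measure_le_measure_univ
          (fun y => isClosed_closedBall.measurableSet.nullMeasurableSet)
          fun y z hyz => (hdisj y.2 z.2 (Subtype.coe_injective.ne hyz)).aedisjoint

/-- The union of the doubled balls of a covering. -/
def BallCover.doubled {E : Set (Rn n)} (c : BallCover E) : Set (Rn n) :=
  ⋃ j, ball (c.center j) (2 * c.radius j)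

lemma BallCover.hContent_doubled_le (hγ : 0 < γ) {E : Set (Rn n)} (c : BallCover E) :
    hContent n γ c.doubled ≤ ENNReal.ofReal (2 ^ γ) * c.centerMeasure γ univ := by
  rw [centerMeasure_univ, ← ENNReal.tsum_mul_left]
  exact (hContent_iUnion_le hγ _).trans
    (ENNReal.tsum_le_tsum fun j => hContent_ball_mul_le hγ _ zero_le_two _)

lemma BallCover.hContent_ball_inter_le_centerMeasure (hγ : 0 < γ) {E : Set (Rn n)}
    (c : BallCover E) {y : Rn n} (hy : y ∉ c.doubled) (s : ℝ) :
    hContent n γ (ball y s ∩ E) ≤ c.centerMeasure γ (closedBall y (2 * s)) := by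
  refine (hContent_le_tsum hγ (fun j : {j | c.center j ∈ closedBall y (2 * s)} => c.center j)
    (fun j => c.radius j) ?_).trans (c.tsum_ballCost_le_centerMeasure _)
  rintro w ⟨hwy, hwE⟩
  obtain ⟨j, hj⟩ := mem_iUnion.1 (c.subset_iUnion_ball hwE)
  -- A ball of the covering that meets `ball y s` but whose double misses `y` has radius below `s`.
  have hyj : 2 * c.radius j ≤ dist y (c.center j) :=
    not_lt.1 fun hlt => hy (mem_iUnion.2 ⟨j, hlt⟩)
  rw [mem_ball] at hwy hj
  have htri := dist_triangle_left y (c.center j) w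
  refine mem_iUnion.2 ⟨⟨j, ?_⟩, hj⟩
  rw [mem_ofPred_eq, mem_closedBall']
  linarith

end Content

section MaximalFunction

variable {n : ℕ} {β γ : ℝ}

lemma inv_ballCost_mul_choquetOn_le_maximalH (g : Rn n → ℝ≥0∞) (x : Rn n) {r : ℝ} (hr : 0 < r) :
    (ballCost β r)⁻¹ * choquetOn (hContent n β) (ball x r) g ≤ maximalH n β g x :=
  le_iSup₂ (f := fun r (_ : 0 < r) =>
    (ballCost β r)⁻¹ * choquetOn (hContent n β) (ball x r) g) r hr

lemma lt_maximalH_iff (hβ : 0 < β) {g : Rn n → ℝ≥0∞} {x : Rn n} {t : ℝ≥0∞} :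
    t < maximalH n β g x ↔
      ∃ r > 0, t * ballCost β r < choquetOn (hContent n β) (ball x r) g := by
  simp only [maximalH, lt_iSup_iff, exists_prop]
  refine exists_congr fun r => and_congr_right fun hr => ?_
  rw [← ballCost, mul_comm, ← div_eq_mul_inv, ENNReal.lt_div_iff_mul_lt
    (Or.inl (ballCost_ne_zero hβ hr)) (Or.inl (ballCost_ne_top β r))]

lemma maximalH_le_rpow (hγ : 0 < γ) (hγβ : γ ≤ β) (g : Rn n → ℝ≥0∞) (x : Rn n) :
    maximalH n β g x ≤
      ENNReal.ofReal (β / γ) * maximalH n γ (fun y => g y ^ (γ / β)) x ^ (β / γ) := by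
  have hβ : 0 < β := hγ.trans_le hγβ
  have hq : 0 ≤ β / γ := by positivity
  set K := omegaC β / omegaC γ ^ (β / γ)
  have hK : K ≠ 0 := omegaC_div_rpow_ne_zero hγ hβ
  have hK' : K ≠ ∞ := omegaC_div_rpow_ne_top hγ β
  refine iSup₂_le fun r hr => ?_
  set J := choquetOn (hContent n γ) (ball x r) fun y => g y ^ (γ / β)
  have hchoquet : choquetOn (hContent n β) (ball x r) g ≤
      K * (ENNReal.ofReal (β / γ) * J ^ (β / γ)) := by
    simpa only [inv_div] using choquetOn_le_rpow hContent_mono hK'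
      ((one_le_div hγ).2 hγβ) (hContent_le_mul_rpow hγ hγβ) (ball x r) g
  calc (ballCost β r)⁻¹ * choquetOn (hContent n β) (ball x r) g
      ≤ (K * ballCost γ r ^ (β / γ))⁻¹ * (K * (ENNReal.ofReal (β / γ) * J ^ (β / γ))) := by
        rw [ballCost_eq_mul_rpow hγ hβ.le hr]
        gcongr
    _ = ENNReal.ofReal (β / γ) * ((ballCost γ r)⁻¹ * J) ^ (β / γ) := by
        rw [ENNReal.mul_inv (Or.inl hK) (Or.inl hK'), ENNReal.mul_rpow_of_nonneg _ _ hq,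
          ENNReal.inv_rpow, mul_mul_mul_comm, ENNReal.inv_mul_cancel hK hK', one_mul,
          mul_left_comm]
    _ ≤ ENNReal.ofReal (β / γ) * maximalH n γ (fun y => g y ^ (γ / β)) x ^ (β / γ) := by
        gcongr
        exact inv_ballCost_mul_choquetOn_le_maximalH _ x hr

section Layers

variable {a : ℝ}

/-- The centre measures of coverings of countably many sets `E k`, weighted by the levels `2 ^ k a`.
When `E k` is the superlevel set `{g > 2 ^ k a}`, the total mass is a dyadic sum approximating the
part of `∫ g dH^γ_∞` above the level `a`. -/
def layerMeasure {E : ℕ → Set (Rn n)} (γ a : ℝ) (c : ∀ k, BallCover (E k)) : Measure (Rn n) :=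
  Measure.sum fun k => ENNReal.ofReal (2 ^ k * a) • (c k).centerMeasure γ

lemma layerMeasure_apply {E : ℕ → Set (Rn n)} (c : ∀ k, BallCover (E k)) {s : Set (Rn n)}
    (hs : MeasurableSet s) :
    layerMeasure γ a c s = ∑' k, ENNReal.ofReal (2 ^ k * a) * (c k).centerMeasure γ s := by
  simp only [layerMeasure, Measure.sum_apply _ hs, Measure.smul_apply, smul_eq_mul]

lemma mul_hContent_iUnion_doubled_le (hγ : 0 < γ) (ha : 0 ≤ a) {E : ℕ → Set (Rn n)}
    (c : ∀ k, BallCover (E k)) :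
    ENNReal.ofReal a * hContent n γ (⋃ k, (c k).doubled) ≤
      ENNReal.ofReal (2 ^ γ) * layerMeasure γ a c univ := by
  rw [layerMeasure_apply c MeasurableSet.univ, ← ENNReal.tsum_mul_left]
  calc ENNReal.ofReal a * hContent n γ (⋃ k, (c k).doubled)
      ≤ ∑' k, ENNReal.ofReal a * (ENNReal.ofReal (2 ^ γ) * (c k).centerMeasure γ univ) := by
        rw [ENNReal.tsum_mul_left]
        gcongr
        exact (hContent_iUnion_le hγ _).trans
          (ENNReal.tsum_le_tsum fun k => (c k).hContent_doubled_le hγ)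
    _ ≤ ∑' k : ℕ, ENNReal.ofReal (2 ^ γ) *
          (ENNReal.ofReal (2 ^ k * a) * (c k).centerMeasure γ univ) := by
        refine ENNReal.tsum_le_tsum fun k => ?_
        rw [mul_left_comm]
        gcongr
        exact le_mul_of_one_le_left ha (one_le_pow₀ one_le_two)

lemma choquetOn_ball_le_add_layerMeasure (hγ : 0 < γ) {g : Rn n → ℝ≥0∞} (ha : 0 < a)
    (c : ∀ k : ℕ, BallCover {y | ENNReal.ofReal (2 ^ k * a) < g y}) {y : Rn n}
    (hy : y ∉ ⋃ k, (c k).doubled) (s : ℝ) :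
    choquetOn (hContent n γ) (ball y s) g ≤
      ENNReal.ofReal a * ballCost γ s + layerMeasure γ a c (closedBall y (2 * s)) := by
  refine (choquetOn_le_add_tsum hContent_mono _ g ha).trans ?_
  rw [layerMeasure_apply c isClosed_closedBall.measurableSet]
  gcongr with k
  · exact hContent_ball_le hγ y s
  · exact (c k).hContent_ball_inter_le_centerMeasure hγ (fun hk => hy (mem_iUnion.2 ⟨k, hk⟩)) s

lemma mul_hContent_maximalH_diff_doubled_le (hγ : 0 < γ) {g : Rn n → ℝ≥0∞} (ha : 0 < a)
    (c : ∀ k : ℕ, BallCover {y | ENNReal.ofReal (2 ^ k * a) < g y}) :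
    ENNReal.ofReal a *
        hContent n γ ({x | 2 * ENNReal.ofReal a < maximalH n γ g x} \ ⋃ k, (c k).doubled) ≤
      ENNReal.ofReal (12 ^ γ) * layerMeasure γ a c univ := by
  set B := {x | 2 * ENNReal.ofReal a < maximalH n γ g x} \ ⋃ k, (c k).doubled
  have hpow : ENNReal.ofReal (2 ^ γ) ≠ 0 := (ENNReal.ofReal_pos.2 (by positivity)).ne'
  have hdensity : ∀ y ∈ B, ∃ r > 0,
      ENNReal.ofReal a / ENNReal.ofReal (2 ^ γ) * ballCost γ r ≤
        layerMeasure γ a c (closedBall y r) := by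
    rintro y ⟨hy, hyU⟩
    obtain ⟨s, hs, hlt⟩ := (lt_maximalH_iff hγ).1 hy
    refine ⟨2 * s, by positivity, ?_⟩
    rw [ballCost_mul zero_le_two hs.le, ← mul_assoc,
      ENNReal.div_mul_cancel hpow ENNReal.ofReal_ne_top]
    -- Levels below `a` account for at most half of the average that exceeds `2 * a`.
    have hfin : ENNReal.ofReal a * ballCost γ s ≠ ∞ :=
      ENNReal.mul_ne_top ENNReal.ofReal_ne_top (ballCost_ne_top γ s)
    rw [← ENNReal.add_le_add_iff_left hfin, ← two_mul, ← mul_assoc]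
    exact hlt.le.trans (choquetOn_ball_le_add_layerMeasure hγ ha c hyU s)
  calc ENNReal.ofReal a * hContent n γ B
      = ENNReal.ofReal (2 ^ γ) *
          (ENNReal.ofReal a / ENNReal.ofReal (2 ^ γ) * hContent n γ B) := by
        rw [← mul_assoc, ENNReal.mul_div_cancel hpow ENNReal.ofReal_ne_top]
    _ ≤ ENNReal.ofReal (2 ^ γ) * (ENNReal.ofReal (6 ^ γ) * layerMeasure γ a c univ) := by
        exact mul_le_mul_right (mul_hContent_le_of_density_ge hγ _ _ hdensity) _
    _ = ENNReal.ofReal (12 ^ γ) * layerMeasure γ a c univ := by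
        rw [← mul_assoc, ← ENNReal.ofReal_mul (by positivity),
          ← Real.mul_rpow zero_le_two (by norm_num)]
        norm_num

lemma mul_hContent_maximalH_le_layerMeasure (hγ : 0 < γ) {g : Rn n → ℝ≥0∞} (ha : 0 < a)
    (c : ∀ k : ℕ, BallCover {y | ENNReal.ofReal (2 ^ k * a) < g y}) :
    ENNReal.ofReal a * hContent n γ {x | 2 * ENNReal.ofReal a < maximalH n γ g x} ≤
      ENNReal.ofReal (2 ^ γ + 12 ^ γ) * layerMeasure γ a c univ := by
  set A := {x | 2 * ENNReal.ofReal a < maximalH n γ g x}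
  set U := ⋃ k, (c k).doubled
  calc ENNReal.ofReal a * hContent n γ A
      ≤ ENNReal.ofReal a * hContent n γ U + ENNReal.ofReal a * hContent n γ (A \ U) := by
        rw [← mul_add]
        gcongr
        refine (hContent_mono ?_).trans (hContent_union_le hγ U (A \ U))
        rw [union_sdiff_self]
        exact subset_union_right
    _ ≤ ENNReal.ofReal (2 ^ γ) * layerMeasure γ a c univ +
          ENNReal.ofReal (12 ^ γ) * layerMeasure γ a c univ :=
        add_le_add (mul_hContent_iUnion_doubled_le hγ ha.le c)
          (mul_hContent_maximalH_diff_doubled_le hγ ha c)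
    _ = ENNReal.ofReal (2 ^ γ + 12 ^ γ) * layerMeasure γ a c univ := by
        rw [← add_mul, ENNReal.ofReal_add (by positivity) (by positivity)]

end Layers

lemma mul_hContent_maximalH_le_choquet (hγ : 0 < γ) (g : Rn n → ℝ≥0∞) {t : ℝ} (ht : 0 < t) :
    ENNReal.ofReal t * hContent n γ {x | ENNReal.ofReal t < maximalH n γ g x} ≤
      ENNReal.ofReal (4 * (2 ^ γ + 12 ^ γ)) * choquet (hContent n γ) g := by
  obtain ⟨a, rfl⟩ : ∃ a, t = 2 * a := ⟨t / 2, by ring⟩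
  have ha : 0 < a := by linarith
  set L := ENNReal.ofReal (2 ^ γ + 12 ^ γ)
  have hL : L ≠ 0 := (ENNReal.ofReal_pos.2 (by positivity)).ne'
  have hsum : ∑' k : ℕ, ENNReal.ofReal (2 ^ k * a) *
        hContent n γ {y | ENNReal.ofReal (2 ^ k * a) < g y} =
      ⨅ c : ∀ k : ℕ, BallCover {y | ENNReal.ofReal (2 ^ k * a) < g y},
        layerMeasure γ a c univ := by
    have hne (k : ℕ) : ENNReal.ofReal (2 ^ k * a) ≠ 0 := (ENNReal.ofReal_pos.2 (by positivity)).ne'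
    simp only [hContent_eq_iInf, ENNReal.mul_iInf_of_ne (hne _) ENNReal.ofReal_ne_top,
      tsum_iInf_eq_iInf_tsum, layerMeasure_apply _ MeasurableSet.univ]
  rw [ENNReal.ofReal_mul zero_le_two, ENNReal.ofReal_ofNat, mul_assoc]
  calc 2 * (ENNReal.ofReal a * hContent n γ {x | 2 * ENNReal.ofReal a < maximalH n γ g x})
      ≤ 2 * (L * ∑' k : ℕ, ENNReal.ofReal (2 ^ k * a) *
          hContent n γ {y | ENNReal.ofReal (2 ^ k * a) < g y}) := by
        rw [hsum, ENNReal.mul_iInf_of_ne hL ENNReal.ofReal_ne_top]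
        gcongr
        exact le_iInf fun c => mul_hContent_maximalH_le_layerMeasure hγ ha c
    _ ≤ 2 * (L * (2 * choquet (hContent n γ) g)) := by
        gcongr
        exact tsum_two_pow_le_choquet hContent_mono g ha
    _ = ENNReal.ofReal (4 * (2 ^ γ + 12 ^ γ)) * choquet (hContent n γ) g := by
        rw [ENNReal.ofReal_mul (by norm_num), ENNReal.ofReal_ofNat]
        ring

lemma superlevel_maximalH_subset (hγ : 0 < γ) (hγβ : γ ≤ β) (g : Rn n → ℝ≥0∞) {t : ℝ}
    (ht : 0 < t) :
    {x | ENNReal.ofReal t < maximalH n β g x} ⊆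
      {x | ENNReal.ofReal ((t / (β / γ)) ^ (γ / β)) <
        maximalH n γ (fun y => g y ^ (γ / β)) x} := by
  have hβ : 0 < β := hγ.trans_le hγβ
  have hq : 0 < β / γ := div_pos hβ hγ
  intro x hx
  have hlt : ENNReal.ofReal (t / (β / γ)) < maximalH n γ (fun y => g y ^ (γ / β)) x ^ (β / γ) := by
    rw [ENNReal.ofReal_div_of_pos hq]
    exact ENNReal.div_lt_of_lt_mul' (hx.trans_le (maximalH_le_rpow hγ hγβ g x))
  have hpow : ENNReal.ofReal ((t / (β / γ)) ^ (γ / β)) =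
      ENNReal.ofReal (t / (β / γ)) ^ (β / γ)⁻¹ := by
    rw [inv_div, ENNReal.ofReal_rpow_of_pos (by positivity)]
  rwa [mem_ofPred_eq, hpow, ENNReal.rpow_inv_lt_iff hq]

theorem statement9_general (n : ℕ) {γ β : ℝ} (hγ : 0 < γ) (hγβ : γ ≤ β) :
    ∃ C : ℝ, 0 < C ∧ ∀ (g : Rn n → ℝ≥0∞) (t : ℝ), 0 < t →
      hContent n γ {x | ENNReal.ofReal t < maximalH n β g x} ≤
        ENNReal.ofReal C / ENNReal.ofReal t ^ (γ / β) *
          choquet (hContent n γ) (fun x => g x ^ (γ / β)) := by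
  have hβ : 0 < β := hγ.trans_le hγβ
  have hq : 0 < β / γ := div_pos hβ hγ
  refine ⟨4 * (2 ^ γ + 12 ^ γ) * (β / γ) ^ (γ / β), by positivity, fun g t ht => ?_⟩
  set I := choquet (hContent n γ) fun x => g x ^ (γ / β)
  have hs : 0 < (t / (β / γ)) ^ (γ / β) := by positivity
  calc hContent n γ {x | ENNReal.ofReal t < maximalH n β g x}
      ≤ hContent n γ {x | ENNReal.ofReal ((t / (β / γ)) ^ (γ / β)) <
          maximalH n γ (fun y => g y ^ (γ / β)) x} :=
        hContent_mono (superlevel_maximalH_subset hγ hγβ g ht)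
    _ ≤ ENNReal.ofReal (4 * (2 ^ γ + 12 ^ γ)) * I /
          ENNReal.ofReal ((t / (β / γ)) ^ (γ / β)) := by
        rw [ENNReal.le_div_iff_mul_le (Or.inl (ENNReal.ofReal_pos.2 hs).ne')
          (Or.inl ENNReal.ofReal_ne_top), mul_comm]
        exact mul_hContent_maximalH_le_choquet hγ _ hs
    _ = ENNReal.ofReal (4 * (2 ^ γ + 12 ^ γ) * (β / γ) ^ (γ / β)) /
          ENNReal.ofReal t ^ (γ / β) * I := by
        rw [ENNReal.ofReal_rpow_of_pos ht, ← ENNReal.ofReal_div_of_pos (by positivity),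
          ENNReal.mul_div_right_comm, ← ENNReal.ofReal_div_of_pos hs,
          Real.div_rpow ht.le hq.le, div_div_eq_mul_div]

end MaximalFunction

/-- Weak-type endpoint bound with `p = γ/β < 1`:
`H^γ_∞({M_{H^β_∞} f > t}) ≤ (C/t^p) ∫ |f|^p dH^γ_∞` for `f ∈ L^p(H^γ_∞)`. -/
theorem statement9 (n : ℕ) (γ β : ℝ) (hγ : 0 < γ) (hγβ : γ < β) (hβn : β ≤ n) :
    ∃ C : ℝ, 0 < C ∧ ∀ f : Rn n → ℝ, MemChoquetLp (hContent n γ) (γ / β) f →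
      ∀ t : ℝ, 0 < t →
        hContent n γ {x | ENNReal.ofReal t < maximalH n β (fun y => ENNReal.ofReal |f y|) x} ≤
          (ENNReal.ofReal C / ENNReal.ofReal t ^ (γ / β)) *
            choquet (hContent n γ) (fun x => ENNReal.ofReal |f x| ^ (γ / β)) := by
  obtain ⟨C, hC, hweak⟩ := statement9_general n hγ hγβ.le
  exact ⟨C, hC, fun f _ t ht => hweak _ t ht⟩

end
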